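/- arXiv:2601.08969 — 3 statements merged into one kernel-verified Lean document; each statement's English description precedes it below -/
import Mathlib

section
/- For every positive integer d, ∫_{U(d)} (C ⊗ C)† · Π^eq · (C ⊗ C) dμ_d(C) = (2/(d+1)) · Π^sym. -/
open Matrix MeasureTheory
open scoped Kronecker

noncomputable instance {m n : Type*} [Fintype m] [Fintype n] :
    MeasurableSpace (Matrix m n ℂ) := borel _
instance {m n : Type*} [Fintype m] [Fintype n] : BorelSpace (Matrix m n ℂ) := ⟨rfl⟩

/-- `Π^eq = Σ_x |x,x⟩⟨x,x|`. -/
noncomputable def PiEq (d : ℕ) : Matrix (Fin d × Fin d) (Fin d × Fin d) ℂ :=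
  Matrix.of fun p q => if p.1 = p.2 ∧ q.1 = q.2 ∧ p.1 = q.1 then 1 else 0

/-- The swap operator `F|x,y⟩ = |y,x⟩`. -/
noncomputable def SwapF (d : ℕ) : Matrix (Fin d × Fin d) (Fin d × Fin d) ℂ :=
  Matrix.of fun p q => if p.1 = q.2 ∧ p.2 = q.1 then 1 else 0

/-- `Π^sym = (1/2)(I + F)`, the projection onto the symmetric subspace. -/
noncomputable def PiSym (d : ℕ) : Matrix (Fin d × Fin d) (Fin d × Fin d) ℂ :=
  ((1 : ℂ) / 2) • ((1 : Matrix (Fin d × Fin d) (Fin d × Fin d) ℂ) + SwapF d)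

section UnitaryMoments

variable {n : Type*} [Fintype n] [DecidableEq n]

instance Matrix.unitaryGroup.instCompactSpace : CompactSpace (Matrix.unitaryGroup n ℂ) := by
  have hK : IsCompact ({A | ∀ i j, A i j ∈ Metric.closedBall (0 : ℂ) 1} : Set (Matrix n n ℂ)) := by
    have h := isCompact_univ_pi fun _ : n => isCompact_univ_pi fun _ : n =>
      isCompact_closedBall (0 : ℂ) 1
    have hset : (Set.univ.pi fun _ : n => Set.univ.pi fun _ : n => Metric.closedBall (0 : ℂ) 1) =
        {A | ∀ i j, A i j ∈ Metric.closedBall (0 : ℂ) 1} := by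
      ext A
      simp [Set.mem_pi]
    exact hset ▸ h
  have hclosed : IsClosed (Matrix.unitaryGroup n ℂ : Set (Matrix n n ℂ)) := by
    have h : (Matrix.unitaryGroup n ℂ : Set (Matrix n n ℂ)) = {A | A * star A = 1} := by
      ext A
      exact Matrix.mem_unitaryGroup_iff
    rw [h]
    exact isClosed_eq (by fun_prop) continuous_const
  refine isCompact_iff_compactSpace.mp (hK.of_isClosed_subset hclosed fun A hA i j => ?_)
  simpa using entry_norm_bound_of_unitary hA i j

theorem MeasureTheory.Measure.isMulRightInvariant_of_isProbabilityMeasure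
    {G : Type*} [Group G] [TopologicalSpace G] [IsTopologicalGroup G] [LocallyCompactSpace G]
    [MeasurableSpace G] [BorelSpace G] (μ : Measure G) [μ.IsHaarMeasure]
    [IsProbabilityMeasure μ] : μ.IsMulRightInvariant where
  map_mul_right_eq_self g := by
    have : IsProbabilityMeasure (μ.map (· * g)) :=
      Measure.isProbabilityMeasure_map (continuous_mul_const g).measurable.aemeasurable
    exact Measure.isHaarMeasure_eq_of_isProbabilityMeasure _ _

variable (μ : Measure (Matrix.unitaryGroup n ℂ))

/-- The `((a, b), (c, e))` entry of `∫ (C ⊗ C)† Π^eq (C ⊗ C) dμ(C)`, written out in coordinates. -/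
noncomputable def twirlEntry (a b c e : n) : ℂ :=
  ∫ C : Matrix.unitaryGroup n ℂ, ∑ x, star (C.1 x a) * star (C.1 x b) * C.1 x c * C.1 x e ∂μ

theorem twirlEntry_swap_right (a b c e : n) : twirlEntry μ a b e c = twirlEntry μ a b c e := by
  simp only [twirlEntry, mul_right_comm]

theorem twirlEntry_swap_left (a b c e : n) : twirlEntry μ b a c e = twirlEntry μ a b c e := by
  simp only [twirlEntry, mul_comm (star _) (star _)]

theorem integrable_of_continuous_unitaryGroup [IsProbabilityMeasure μ]
    {f : Matrix.unitaryGroup n ℂ → ℂ} (hf : Continuous f) : Integrable f μ :=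
  hf.integrable_of_hasCompactSupport (HasCompactSupport.of_compactSpace f)

theorem continuous_unitaryGroup_entry (i j : n) :
    Continuous fun C : Matrix.unitaryGroup n ℂ => C.1 i j :=
  continuous_subtype_val.matrix_elem i j

theorem integrable_twirlEntry [IsProbabilityMeasure μ] (a b c e : n) :
    Integrable (fun C : Matrix.unitaryGroup n ℂ =>
      ∑ x, star (C.1 x a) * star (C.1 x b) * C.1 x c * C.1 x e) μ := by
  have h := continuous_unitaryGroup_entry (n := n)
  exact integrable_of_continuous_unitaryGroup μ <| continuous_finsetSum _ fun x _ =>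
    (((h x a).star.mul (h x b).star).mul (h x c)).mul (h x e)

theorem sum_twirlEntry [IsProbabilityMeasure μ] (a : n) : ∑ b, twirlEntry μ a b a b = 1 := by
  simp only [twirlEntry]
  rw [← integral_finsetSum _ fun b _ => integrable_twirlEntry μ a b a b]
  have key : ∀ C : Matrix.unitaryGroup n ℂ,
      ∑ b, ∑ x, star (C.1 x a) * star (C.1 x b) * C.1 x a * C.1 x b = 1 := by
    intro C
    have hrow : ∀ x, ∑ b, C.1 x b * star (C.1 x b) = 1 := fun x => by
      simpa [Matrix.mul_apply] using congrFun₂ (Matrix.mem_unitaryGroup_iff.mp C.2) x x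
    have hcol : ∑ x, star (C.1 x a) * C.1 x a = 1 := by
      simpa [Matrix.mul_apply] using congrFun₂ (Matrix.mem_unitaryGroup_iff'.mp C.2) a a
    rw [Finset.sum_comm, ← hcol]
    refine Finset.sum_congr rfl fun x _ => ?_
    rw [← mul_one (star (C.1 x a) * C.1 x a), ← hrow x, Finset.mul_sum]
    exact Finset.sum_congr rfl fun b _ => by ring
  simp only [key]
  simp

variable [μ.IsHaarMeasure] [IsProbabilityMeasure μ]

theorem twirlEntry_eq_sum (V : Matrix.unitaryGroup n ℂ) (a b c e : n) :
    twirlEntry μ a b c e = ∑ i, ∑ j, ∑ k, ∑ l,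
      star (V.1 i a) * star (V.1 j b) * V.1 k c * V.1 l e * twirlEntry μ i j k l := by
  have := μ.isMulRightInvariant_of_isProbabilityMeasure
  have hI := integrable_twirlEntry μ
  conv_lhs => rw [twirlEntry, ← integral_mul_right_eq_self _ V]
  have key : ∀ C : Matrix.unitaryGroup n ℂ,
      ∑ x, star ((C * V).1 x a) * star ((C * V).1 x b) * (C * V).1 x c * (C * V).1 x e =
      ∑ i, ∑ j, ∑ k, ∑ l, star (V.1 i a) * star (V.1 j b) * V.1 k c * V.1 l e *
        ∑ x, star (C.1 x i) * star (C.1 x j) * C.1 x k * C.1 x l := by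
    intro C
    have hx : ∀ x,
        star ((C * V).1 x a) * star ((C * V).1 x b) * (C * V).1 x c * (C * V).1 x e =
        ∑ i, ∑ j, ∑ k, ∑ l, star (V.1 i a) * star (V.1 j b) * V.1 k c * V.1 l e *
          (star (C.1 x i) * star (C.1 x j) * C.1 x k * C.1 x l) := by
      intro x
      simp only [Submonoid.coe_mul, Matrix.mul_apply, star_sum, star_mul']
      simp only [mul_assoc]
      simp only [Finset.sum_mul]
      simp only [Finset.mul_sum]
      refine Finset.sum_congr rfl fun i _ => Finset.sum_congr rfl fun j _ =>
        Finset.sum_congr rfl fun k _ => Finset.sum_congr rfl fun l _ => ?_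
      ring
    simp only [hx, Finset.mul_sum]
    rw [Finset.sum_comm]
    refine Finset.sum_congr rfl fun i _ => ?_
    rw [Finset.sum_comm]
    refine Finset.sum_congr rfl fun j _ => ?_
    rw [Finset.sum_comm]
    refine Finset.sum_congr rfl fun k _ => Finset.sum_comm
  simp only [key]
  rw [integral_finsetSum _ fun i _ => ?_]
  · refine Finset.sum_congr rfl fun i _ => ?_
    rw [integral_finsetSum _ fun j _ => ?_]
    · refine Finset.sum_congr rfl fun j _ => ?_
      rw [integral_finsetSum _ fun k _ => ?_]
      · refine Finset.sum_congr rfl fun k _ => ?_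
        rw [integral_finsetSum _ fun l _ => (hI i j k l).const_mul _]
        exact Finset.sum_congr rfl fun l _ => integral_const_mul _ _
      · exact integrable_finsetSum _ fun l _ => (hI i j k l).const_mul _
    · exact integrable_finsetSum _ fun k _ => integrable_finsetSum _ fun l _ =>
        (hI i j k l).const_mul _
  · exact integrable_finsetSum _ fun j _ => integrable_finsetSum _ fun k _ =>
      integrable_finsetSum _ fun l _ => (hI i j k l).const_mul _

theorem diagonal_mem_unitaryGroup {z : n → ℂ} (hz : ∀ i, z i * star (z i) = 1) :
    Matrix.diagonal z ∈ Matrix.unitaryGroup n ℂ := by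
  rw [Matrix.mem_unitaryGroup_iff, Matrix.star_eq_conjTranspose, Matrix.diagonal_conjTranspose,
    Matrix.diagonal_mul_diagonal, ← Matrix.diagonal_one]
  exact congrArg _ (funext hz)

theorem twirlEntry_eq_phase_mul {z : n → ℂ} (hz : ∀ i, z i * star (z i) = 1) (a b c e : n) :
    twirlEntry μ a b c e = star (z a) * star (z b) * z c * z e * twirlEntry μ a b c e := by
  conv_lhs => rw [twirlEntry_eq_sum μ ⟨_, diagonal_mem_unitaryGroup hz⟩]
  simp [Matrix.diagonal_apply, apply_ite (starRingEnd ℂ), ite_mul, mul_ite]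

theorem twirlEntry_eq_zero {a b c e : n} (h : ¬ ((a = c ∧ b = e) ∨ (a = e ∧ b = c))) :
    twirlEntry μ a b c e = 0 := by
  by_contra h0
  have key : ∀ j : n, star (if a = j then Complex.I else 1) * star (if b = j then Complex.I else 1)
      * (if c = j then Complex.I else 1) * (if e = j then Complex.I else 1) = 1 := by
    intro j
    have := twirlEntry_eq_phase_mul μ (z := fun i => if i = j then Complex.I else 1)
      (fun i => by split_ifs <;> simp) a b c e
    exact mul_right_cancel₀ h0 (this.symm.trans (one_mul _).symm)
  have hphase := And.intro (key a) (key b)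
  split_ifs at hphase <;>
    first
    | grind
    | norm_num [Complex.ext_iff] at hphase

/-- The matrix `1 + ((i - 1) / 2) E`, where `E` is the all-ones matrix supported on the rows and
columns `a` and `b`. It is unitary when `a ≠ b`. -/
noncomputable def mixMatrix (a b : n) : Matrix n n ℂ :=
  1 + ((Complex.I - 1) / 2) • Matrix.vecMulVec (Pi.single a 1 + Pi.single b 1)
    (Pi.single a 1 + Pi.single b 1)

theorem mixMatrix_mem_unitaryGroup {a b : n} (hab : a ≠ b) :
    mixMatrix a b ∈ Matrix.unitaryGroup n ℂ := by
  set v : n → ℂ := Pi.single a 1 + Pi.single b 1 with hv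
  have hstar : star v = v := by
    ext i
    simp [hv, Pi.single_apply, apply_ite (starRingEnd ℂ)]
  have hE : Matrix.vecMulVec v v * Matrix.vecMulVec v v = (2 : ℂ) • Matrix.vecMulVec v v := by
    have hvv : v ⬝ᵥ v = 2 := by
      simp [hv, hab, hab.symm]
      norm_num
    rw [Matrix.vecMulVec_mul_vecMulVec, hvv]
    ext i j
    simp [Matrix.vecMulVec_apply]
    ring
  rw [Matrix.mem_unitaryGroup_iff, mixMatrix, ← hv, Matrix.star_eq_conjTranspose]
  rw [Matrix.conjTranspose_add, Matrix.conjTranspose_smul, Matrix.conjTranspose_vecMulVec, hstar,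
    Matrix.conjTranspose_one]
  have hc : (Complex.I - 1) / 2 + star ((Complex.I - 1) / 2) +
      2 * ((Complex.I - 1) / 2 * star ((Complex.I - 1) / 2)) = 0 := by
    apply Complex.ext <;> simp <;> norm_num
  simp only [add_mul, mul_add, one_mul, mul_one, smul_mul_assoc, mul_smul_comm, hE]
  rw [← sub_eq_zero, ← zero_smul ℂ (Matrix.vecMulVec v v), ← hc]
  module

theorem twirlEntry_self_eq {a b : n} (hab : a ≠ b) :
    twirlEntry μ a a a a =
      (twirlEntry μ a a a a + twirlEntry μ b b b b) / 4 + twirlEntry μ a b a b := by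
  have hcol : ∀ i, mixMatrix a b i a =
      (if i = a then (1 + Complex.I) / 2 else 0) + if i = b then (Complex.I - 1) / 2 else 0 := by
    intro i
    by_cases hi : i = a
    · subst hi
      simp [mixMatrix, Matrix.vecMulVec_apply, hab]
      ring
    · by_cases hi' : i = b
      · subst hi'
        simp [mixMatrix, Matrix.vecMulVec_apply, hab, hi]
      · simp [mixMatrix, Matrix.vecMulVec_apply, hi, hi']
  conv_lhs => rw [twirlEntry_eq_sum μ ⟨_, mixMatrix_mem_unitaryGroup hab⟩]
  have hz : ∀ i j k l, ¬ ((i = k ∧ j = l) ∨ (i = l ∧ j = k)) → twirlEntry μ i j k l = 0 :=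
    fun i j k l => twirlEntry_eq_zero μ
  simp only [hcol, star_add, apply_ite (star : ℂ → ℂ), star_zero, add_mul, mul_add,
    Finset.sum_add_distrib, ite_mul, mul_ite, zero_mul, mul_zero, Finset.sum_ite_eq',
    Finset.mem_univ, if_true]
  have e1 : twirlEntry μ a b b a = twirlEntry μ a b a b := twirlEntry_swap_right ..
  have e2 : twirlEntry μ b a a b = twirlEntry μ a b a b := twirlEntry_swap_left ..
  have e3 : twirlEntry μ b a b a = twirlEntry μ a b a b := by
    rw [twirlEntry_swap_left, e1]
  have hp : star ((1 + Complex.I) / 2) * ((1 + Complex.I) / 2) = 1 / 2 := by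
    apply Complex.ext <;> simp <;> norm_num
  have hq : star ((Complex.I - 1) / 2) * ((Complex.I - 1) / 2) = 1 / 2 := by
    apply Complex.ext <;> simp <;> norm_num
  rw [e1, e2, e3, hz a a a b (by tauto), hz a a b a (by tauto), hz a a b b (by tauto),
    hz a b a a (by tauto), hz a b b b (by tauto), hz b a a a (by tauto), hz b a b b (by tauto),
    hz b b a a (by tauto), hz b b a b (by tauto), hz b b b a (by tauto)]
  generalize (1 + Complex.I) / 2 = p, (Complex.I - 1) / 2 = q at hp hq ⊢
  linear_combination twirlEntry μ a a a a * (star p * p + 1 / 2) * hp +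
    twirlEntry μ b b b b * (star q * q + 1 / 2) * hq +
    4 * twirlEntry μ a b a b * (star q * q * hp + 1 / 2 * hq)

theorem two_mul_twirlEntry {a b : n} (hab : a ≠ b) :
    2 * twirlEntry μ a b a b = twirlEntry μ a a a a := by
  have h1 := twirlEntry_self_eq μ hab
  have h2 := twirlEntry_self_eq μ hab.symm
  rw [twirlEntry_swap_left μ a b b a, twirlEntry_swap_right μ a b a b] at h2
  linear_combination (-3 / 2 : ℂ) * h1 - (1 / 2 : ℂ) * h2

theorem twirlEntry_self (a : n) : twirlEntry μ a a a a = 2 / ((Fintype.card n : ℂ) + 1) := by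
  have h := sum_twirlEntry μ a
  have hne : (Fintype.card n : ℂ) + 1 ≠ 0 := Nat.cast_add_one_ne_zero _
  have hb : ∀ b ∈ Finset.univ.erase a, twirlEntry μ a b a b = twirlEntry μ a a a a / 2 :=
    fun b hb => by
      rw [← two_mul_twirlEntry μ (Finset.ne_of_mem_erase hb).symm]
      ring
  have hcard : 1 ≤ Fintype.card n := Fintype.card_pos_iff.mpr ⟨a⟩
  rw [← Finset.add_sum_erase _ _ (Finset.mem_univ a), Finset.sum_congr rfl hb, Finset.sum_const,
    Finset.card_erase_of_mem (Finset.mem_univ a), Finset.card_univ, nsmul_eq_mul,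
    Nat.cast_sub hcard, Nat.cast_one] at h
  rw [eq_div_iff hne]
  linear_combination 2 * h

theorem twirlEntry_eq (a b c e : n) : twirlEntry μ a b c e =
    ((if a = c ∧ b = e then 1 else 0) + if a = e ∧ b = c then 1 else 0) /
      ((Fintype.card n : ℂ) + 1) := by
  by_cases h : (a = c ∧ b = e) ∨ (a = e ∧ b = c)
  · by_cases hab : a = b
    · subst hab
      have hce : a = c ∧ a = e := by tauto
      obtain ⟨rfl, rfl⟩ := hce
      rw [twirlEntry_self]
      norm_num
    · have h2 := two_mul_twirlEntry μ hab
      rw [twirlEntry_self] at h2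
      have h3 : twirlEntry μ a b a b = 1 / ((Fintype.card n : ℂ) + 1) := by
        linear_combination h2 / 2
      rcases h with ⟨rfl, rfl⟩ | ⟨rfl, rfl⟩
      · simp [h3, hab]
      · rw [twirlEntry_swap_right]
        simp [h3, hab]
  · rw [twirlEntry_eq_zero μ h]
    rw [not_or] at h
    simp [h.1, h.2]

end UnitaryMoments

theorem conjTranspose_kronecker_mul_PiEq_mul_apply {d : ℕ} (A : Matrix (Fin d) (Fin d) ℂ)
    (p q : Fin d × Fin d) :
    ((A ⊗ₖ A)ᴴ * PiEq d * (A ⊗ₖ A)) p q =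
      ∑ x, star (A x p.1) * star (A x p.2) * A x q.1 * A x q.2 := by
  have hrow : ∀ r : Fin d × Fin d, ((A ⊗ₖ A)ᴴ * PiEq d) p r =
      if r.1 = r.2 then star (A r.1 p.1) * star (A r.1 p.2) else 0 := by
    intro r
    rw [Matrix.mul_apply, Fintype.sum_prod_type]
    by_cases hr : r.1 = r.2
    · simp [PiEq, hr, Matrix.conjTranspose_apply, ite_and]
    · simp [PiEq, hr]
  rw [Matrix.mul_apply, Fintype.sum_prod_type]
  simp [hrow, mul_assoc]

/-- `∫_{U(d)} (C ⊗ C)† · Π^eq · (C ⊗ C) dμ_d(C) = (2/(d+1)) · Π^sym`, where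
`μ_d` is the Haar probability measure on the unitary group `U(d)` and the matrix-valued
integral is taken entrywise. -/
theorem haar_twirl_PiEq (d : ℕ) (hd : 0 < d)
    (μ : Measure (Matrix.unitaryGroup (Fin d) ℂ))
    [μ.IsHaarMeasure] [IsProbabilityMeasure μ] :
    (Matrix.of fun p q =>
        ∫ C : Matrix.unitaryGroup (Fin d) ℂ,
          ((((C : Matrix (Fin d) (Fin d) ℂ) ⊗ₖ (C : Matrix (Fin d) (Fin d) ℂ))ᴴ *
              PiEq d *
              ((C : Matrix (Fin d) (Fin d) ℂ) ⊗ₖ (C : Matrix (Fin d) (Fin d) ℂ))) p q) ∂μ)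
      = ((2 : ℂ) / ((d : ℂ) + 1)) • PiSym d := by
  ext p q
  rw [Matrix.of_apply]
  simp only [conjTranspose_kronecker_mul_PiEq_mul_apply]
  refine (twirlEntry_eq μ p.1 p.2 q.1 q.2).trans ?_
  simp only [PiSym, SwapF, Matrix.smul_apply, Matrix.add_apply, Matrix.one_apply, Matrix.of_apply,
    Prod.ext_iff, Fintype.card_fin, smul_eq_mul]
  ring
end

section
/- For every positive integer d, (∫_{U(d)} (C ⊗ C)† · Π^eq · (C ⊗ C) dμ_d(C))^{T2} − Π^EPR = (1/(d+1)) · (I − Π^EPR). -/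
open Matrix MeasureTheory
open scoped Kronecker

/-- `Π^EPR = |φ⟩⟨φ|` with `|φ⟩ = (1/√d) Σ_x |x,x⟩`. -/
noncomputable def PiEPR (d : ℕ) : Matrix (Fin d × Fin d) (Fin d × Fin d) ℂ :=
  Matrix.of fun p q => if p.1 = p.2 ∧ q.1 = q.2 then 1 / (d : ℂ) else 0

/-- The partial transpose: `(O^{T2})_{(x,z),(y,w)} = O_{(x,w),(y,z)}`. -/
def ptrans {d : ℕ} (O : Matrix (Fin d × Fin d) (Fin d × Fin d) ℂ) :
    Matrix (Fin d × Fin d) (Fin d × Fin d) ℂ :=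
  Matrix.of fun p q => O (p.1, q.2) (q.1, p.2)

namespace HaarTwirl

theorem isCompact_unitaryGroup (n : Type*) [Fintype n] [DecidableEq n] :
    IsCompact (Matrix.unitaryGroup n ℂ : Set (Matrix n n ℂ)) := by
  have hball : IsCompact (Set.univ.pi fun _ : n => Set.univ.pi fun _ : n =>
      Metric.closedBall (0 : ℂ) 1) :=
    isCompact_univ_pi fun _ => isCompact_univ_pi fun _ => isCompact_closedBall _ _
  refine IsCompact.of_isClosed_subset (s := Set.univ.pi fun _ : n => Set.univ.pi fun _ : n =>
      Metric.closedBall (0 : ℂ) 1) hball ?_ fun U hU i _ j _ => ?_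
  · have : (Matrix.unitaryGroup n ℂ : Set (Matrix n n ℂ)) = {A | A * star A = 1} :=
      Set.ext fun A => Matrix.mem_unitaryGroup_iff
    rw [this]
    exact isClosed_eq (continuous_id.matrix_mul continuous_id.matrix_conjTranspose)
      continuous_const
  · simpa using entry_norm_bound_of_unitary hU i j

instance compactSpace_unitaryGroup (n : Type*) [Fintype n] [DecidableEq n] :
    CompactSpace (Matrix.unitaryGroup n ℂ) :=
  isCompact_iff_compactSpace.mp (isCompact_unitaryGroup n)

theorem isMulRightInvariant_of_compact {G : Type*} [Group G] [TopologicalSpace G]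
    [IsTopologicalGroup G] [CompactSpace G] [MeasurableSpace G] [BorelSpace G]
    (μ : Measure G) [μ.IsHaarMeasure] [IsProbabilityMeasure μ] : μ.IsMulRightInvariant where
  map_mul_right_eq_self g := by
    have : IsProbabilityMeasure (μ.map (· * g)) :=
      Measure.isProbabilityMeasure_map (measurable_mul_const g).aemeasurable
    exact Measure.isHaarMeasure_eq_of_isProbabilityMeasure _ _

/-- The integrand of the fourth moment: the sum over a row index of
`conj C_{xa} * conj C_{xb} * C_{xc} * C_{xe}`. -/
noncomputable def momentIntegrand {n : Type*} [Fintype n] (C : Matrix n n ℂ) (a b c e : n) : ℂ :=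
  ∑ x, star (C x a) * star (C x b) * C x c * C x e

theorem momentIntegrand_mul {n : Type*} [Fintype n] (C V : Matrix n n ℂ) (a b c e : n) :
    momentIntegrand (C * V) a b c e = ∑ k, ∑ l, ∑ p, ∑ q,
      star (V k a) * star (V l b) * V p c * V q e * momentIntegrand C k l p q := by
  have h (x : n) : star ((C * V) x a) * star ((C * V) x b) * (C * V) x c * (C * V) x e =
      ∑ k, ∑ l, ∑ p, ∑ q, star (C x k * V k a) * star (C x l * V l b) * (C x p * V p c) *
        (C x q * V q e) := by
    simp only [← Finset.mul_sum, ← Finset.sum_mul, ← star_sum, ← Matrix.mul_apply]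
  simp only [momentIntegrand, h]
  rw [Finset.sum_comm]
  refine Finset.sum_congr rfl fun k _ => ?_
  rw [Finset.sum_comm]
  refine Finset.sum_congr rfl fun l _ => ?_
  rw [Finset.sum_comm]
  refine Finset.sum_congr rfl fun p _ => ?_
  rw [Finset.sum_comm]
  refine Finset.sum_congr rfl fun q _ => ?_
  rw [Finset.mul_sum]
  refine Finset.sum_congr rfl fun x _ => ?_
  simp only [star_mul']
  ring

/-- The fourth moment of the columns of a random unitary matrix, summed over rows. -/
noncomputable def moment {n : Type*} [Fintype n] [DecidableEq n]
    (μ : Measure (Matrix.unitaryGroup n ℂ)) (a b c e : n) : ℂ :=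
  ∫ C : Matrix.unitaryGroup n ℂ, momentIntegrand (C : Matrix n n ℂ) a b c e ∂μ

section

variable {n : Type*} [Fintype n] [DecidableEq n] (μ : Measure (Matrix.unitaryGroup n ℂ))

theorem continuous_momentIntegrand (a b c e : n) :
    Continuous fun C : Matrix.unitaryGroup n ℂ => momentIntegrand (C : Matrix n n ℂ) a b c e := by
  have h (i j : n) : Continuous fun C : Matrix.unitaryGroup n ℂ => (C : Matrix n n ℂ) i j :=
    continuous_subtype_val.matrix_elem i j
  exact continuous_finsetSum _ fun x _ =>
    (((h x a).star.mul (h x b).star).mul (h x c)).mul (h x e)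

theorem integrable_momentIntegrand [IsFiniteMeasure μ] (a b c e : n) :
    Integrable (fun C : Matrix.unitaryGroup n ℂ => momentIntegrand (C : Matrix n n ℂ) a b c e) μ :=
  (continuous_momentIntegrand a b c e).integrable_of_hasCompactSupport
    (HasCompactSupport.of_compactSpace _)

theorem moment_comm_left (a b c e : n) : moment μ a b c e = moment μ b a c e := by
  simp only [moment, momentIntegrand, mul_comm (star _) (star _)]

theorem moment_comm_right (a b c e : n) : moment μ a b c e = moment μ a b e c := by
  simp only [moment, momentIntegrand, mul_right_comm _ ((_ : Matrix n n ℂ) _ c)]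

theorem sum_moment [IsProbabilityMeasure μ] (a : n) : ∑ b, moment μ a b a b = 1 := by
  have hC (C : Matrix.unitaryGroup n ℂ) : ∑ b, momentIntegrand (C : Matrix n n ℂ) a b a b = 1 := by
    have hrow (x : n) : ∑ b, C.1 x b * star (C.1 x b) = 1 := by
      have := congrFun (congrFun (Matrix.mem_unitaryGroup_iff.mp C.2) x) x
      simpa [Matrix.mul_apply, Matrix.star_apply] using this
    have hcol : ∑ x, star (C.1 x a) * C.1 x a = 1 := by
      have := congrFun (congrFun (Matrix.mem_unitaryGroup_iff'.mp C.2) a) a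
      simpa [Matrix.mul_apply, Matrix.star_apply] using this
    simp only [momentIntegrand]
    rw [Finset.sum_comm, ← hcol]
    refine Finset.sum_congr rfl fun x _ => ?_
    rw [← mul_one (star (C.1 x a) * C.1 x a), ← hrow x, Finset.mul_sum]
    exact Finset.sum_congr rfl fun b _ => by ring
  simp only [moment]
  rw [← integral_finsetSum _ fun b _ => integrable_momentIntegrand μ a b a b]
  simp [hC]

variable [μ.IsHaarMeasure] [IsProbabilityMeasure μ]

theorem moment_eq_sum (V : Matrix.unitaryGroup n ℂ) (a b c e : n) :
    moment μ a b c e = ∑ k, ∑ l, ∑ p, ∑ q,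
      star (V.1 k a) * star (V.1 l b) * V.1 p c * V.1 q e * moment μ k l p q := by
  have := isMulRightInvariant_of_compact μ
  have hI (k l p q : n) (z : ℂ) : Integrable (fun C : Matrix.unitaryGroup n ℂ =>
      z * momentIntegrand (C : Matrix n n ℂ) k l p q) μ :=
    (integrable_momentIntegrand μ k l p q).const_mul z
  conv_lhs => rw [moment, ← integral_mul_right_eq_self _ V]
  simp only [Submonoid.coe_mul, momentIntegrand_mul]
  rw [integral_finsetSum _ fun k _ => integrable_finsetSum _ fun l _ =>
    integrable_finsetSum _ fun p _ => integrable_finsetSum _ fun q _ => hI k l p q _]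
  refine Finset.sum_congr rfl fun k _ => ?_
  rw [integral_finsetSum _ fun l _ =>
    integrable_finsetSum _ fun p _ => integrable_finsetSum _ fun q _ => hI k l p q _]
  refine Finset.sum_congr rfl fun l _ => ?_
  rw [integral_finsetSum _ fun p _ => integrable_finsetSum _ fun q _ => hI k l p q _]
  refine Finset.sum_congr rfl fun p _ => ?_
  rw [integral_finsetSum _ fun q _ => hI k l p q _]
  exact Finset.sum_congr rfl fun q _ => integral_const_mul _ _

theorem moment_of_diagonal {V : Matrix.unitaryGroup n ℂ} {t : n → ℂ}
    (hV : V.1 = Matrix.diagonal t) (a b c e : n) :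
    moment μ a b c e = star (t a) * star (t b) * t c * t e * moment μ a b c e := by
  conv_lhs => rw [moment_eq_sum μ V a b c e]
  simp [hV, Matrix.diagonal_apply, apply_ite (starRingEnd ℂ), ite_mul, mul_ite]

/-- The diagonal unitary matrix with `I` in position `k` and `1` elsewhere on the diagonal. -/
noncomputable def phase (k : n) : Matrix.unitaryGroup n ℂ :=
  ⟨Matrix.diagonal fun i => if i = k then Complex.I else 1, by
    rw [Matrix.mem_unitaryGroup_iff, Matrix.star_eq_conjTranspose, Matrix.diagonal_conjTranspose,
      Matrix.diagonal_mul_diagonal, ← Matrix.diagonal_one]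
    congr 1
    ext i
    by_cases h : i = k <;> simp [h]⟩

theorem moment_eq_zero {a b c e : n} (h : ¬((a = c ∧ b = e) ∨ (a = e ∧ b = c))) :
    moment μ a b c e = 0 := by
  by_contra hm
  have key (k : n) := mul_right_cancel₀ hm
    ((moment_of_diagonal μ (V := phase k) rfl a b c e).symm.trans (one_mul _).symm)
  have ha := key a
  have hb := key b
  have hI : Complex.I ≠ 1 := fun h => by simpa using congrArg Complex.re h
  have hI' : -Complex.I ≠ 1 := fun h => by simpa using congrArg Complex.re h
  have h_neg : (-1 : ℂ) ≠ 1 := by norm_num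
  clear key hm
  simp only [apply_ite star, star_one, Complex.star_def, Complex.conj_I, if_true] at ha hb
  by_cases h₁ : b = a
  · subst h₁
    by_cases h₂ : c = b <;> by_cases h₃ : e = b <;> simp_all
  · have h₁' : a ≠ b := Ne.symm h₁
    by_cases h₂ : c = a
    · subst h₂
      by_cases h₃ : e = b <;> simp_all
    · by_cases h₃ : e = a
      · subst h₃
        by_cases h₄ : c = b <;> simp_all
      · simp_all

/-- The reflection in the hyperplane orthogonal to `e_a + 2 e_b`. -/
noncomputable def reflection (a b : n) (hab : a ≠ b) : Matrix.unitaryGroup n ℂ :=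
  ⟨1 - (2 / 5 : ℂ) • Matrix.vecMulVec (Pi.single a 1 + Pi.single b 2)
      (Pi.single a 1 + Pi.single b 2), by
    have hs : star (Pi.single a 1 + Pi.single b 2 : n → ℂ) = Pi.single a 1 + Pi.single b 2 := by
      ext i
      simp only [Pi.star_apply, Pi.add_apply, Pi.single_apply, star_add]
      split_ifs <;> simp
    have hd : (Pi.single a 1 + Pi.single b 2 : n → ℂ) ⬝ᵥ (Pi.single a 1 + Pi.single b 2) = 5 := by
      simp [hab, hab.symm]
      norm_num
    generalize (Pi.single a 1 + Pi.single b 2 : n → ℂ) = v at hs hd ⊢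
    rw [Matrix.mem_unitaryGroup_iff, Matrix.star_eq_conjTranspose, Matrix.conjTranspose_sub,
      Matrix.conjTranspose_smul, Matrix.conjTranspose_vecMulVec, hs, Matrix.conjTranspose_one]
    simp only [sub_mul, mul_sub, one_mul, mul_one, Matrix.smul_mul, Matrix.mul_smul,
      Matrix.vecMulVec_mul_vecMulVec, hd]
    ext i j
    simp [Matrix.vecMulVec_apply]
    ring⟩

theorem reflection_apply_left {a b : n} (hab : a ≠ b) (k : n) :
    (reflection a b hab).1 k a = (if k = a then 3 / 5 else 0) + (if k = b then -4 / 5 else 0) := by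
  have hb : (Pi.single b 2 : n → ℂ) a = 0 := by simp [hab]
  simp only [reflection, Matrix.sub_apply, Matrix.smul_apply, Matrix.vecMulVec_apply,
    Matrix.one_apply, Pi.add_apply, Pi.single_eq_same, hb, Pi.single_apply, smul_eq_mul]
  by_cases h₁ : k = a
  · subst h₁
    norm_num [hab]
  · by_cases h₂ : k = b <;> norm_num [h₁, h₂, hab.symm]

theorem moment_reflection {a b : n} (hab : a ≠ b) :
    625 * moment μ a a a a =
      81 * moment μ a a a a + 256 * moment μ b b b b + 576 * moment μ a b a b := by
  have h_sum (f : n → ℂ) :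
      ∑ k, (reflection a b hab).1 k a * f k = 3 / 5 * f a + -4 / 5 * f b := by
    simp [reflection_apply_left, add_mul, Finset.sum_add_distrib]
  have h_star (k : n) : star ((reflection a b hab).1 k a) = (reflection a b hab).1 k a := by
    rw [reflection_apply_left, star_add]
    split_ifs <;> simp
  have h := moment_eq_sum μ (reflection a b hab) a a a a
  simp only [h_star, mul_assoc, ← Finset.mul_sum, h_sum] at h
  have h₁ : moment μ a b b a = moment μ a b a b := moment_comm_right μ a b b a
  have h₂ : moment μ b a a b = moment μ a b a b := moment_comm_left μ b a a b
  have h₃ : moment μ b a b a = moment μ a b a b := (moment_comm_left μ b a b a).trans h₁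
  simp only [h₁, h₂, h₃, moment_eq_zero μ (a := a) (b := a) (c := a) (e := b) (by simp [hab]),
    moment_eq_zero μ (a := a) (b := a) (c := b) (e := a) (by simp [hab]),
    moment_eq_zero μ (a := a) (b := a) (c := b) (e := b) (by simp [hab]),
    moment_eq_zero μ (a := a) (b := b) (c := a) (e := a) (by simp [hab.symm]),
    moment_eq_zero μ (a := a) (b := b) (c := b) (e := b) (by simp [hab]),
    moment_eq_zero μ (a := b) (b := a) (c := a) (e := a) (by simp [hab.symm]),
    moment_eq_zero μ (a := b) (b := a) (c := b) (e := b) (by simp [hab]),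
    moment_eq_zero μ (a := b) (b := b) (c := a) (e := a) (by simp [hab.symm]),
    moment_eq_zero μ (a := b) (b := b) (c := a) (e := b) (by simp [hab.symm]),
    moment_eq_zero μ (a := b) (b := b) (c := b) (e := a) (by simp [hab.symm])] at h
  linear_combination 625 * h

theorem moment_self_eq_two_mul {a b : n} (hab : a ≠ b) :
    moment μ a a a a = 2 * moment μ a b a b := by
  have h₁ := moment_reflection μ hab
  have h₂ := moment_reflection μ hab.symm
  rw [moment_comm_left μ b a b a, moment_comm_right μ a b b a] at h₂
  linear_combination (544 * h₁ + 256 * h₂) / 230400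

theorem moment_self (a : n) : moment μ a a a a = 2 / (Fintype.card n + 1) := by
  have h := sum_moment μ a
  rw [← Finset.add_sum_erase _ _ (Finset.mem_univ a), Finset.sum_congr rfl (g := fun _ =>
    moment μ a a a a / 2) fun b hb => by
      rw [moment_self_eq_two_mul μ (Finset.ne_of_mem_erase hb).symm]; ring] at h
  have hpos : 0 < Fintype.card n := Fintype.card_pos_iff.mpr ⟨a⟩
  rw [Finset.sum_const, Finset.card_erase_of_mem (Finset.mem_univ a), Finset.card_univ,
    nsmul_eq_mul, Nat.cast_sub hpos] at h
  have hne : (Fintype.card n + 1 : ℂ) ≠ 0 := Nat.cast_add_one_ne_zero _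
  field_simp
  push_cast at h
  linear_combination 2 * h

theorem moment_eq (a b c e : n) :
    moment μ a b c e = ((if a = c ∧ b = e then 1 else 0) + (if a = e ∧ b = c then 1 else 0)) /
      (Fintype.card n + 1) := by
  by_cases h : (a = c ∧ b = e) ∨ (a = e ∧ b = c)
  · by_cases hab : a = b
    · subst hab
      obtain ⟨rfl, rfl⟩ | ⟨rfl, rfl⟩ := h <;> rw [moment_self] <;> norm_num
    · have key : moment μ a b a b = 1 / (Fintype.card n + 1) := by
        have h₁ := moment_self_eq_two_mul μ hab
        rw [moment_self] at h₁
        linear_combination -h₁ / 2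
      obtain ⟨rfl, rfl⟩ | ⟨rfl, rfl⟩ := h
      · simp [key, hab]
      · rw [moment_comm_right, key]
        simp [hab]
  · rw [moment_eq_zero μ h]
    rw [not_or] at h
    simp [h.1, h.2]

end

theorem conj_PiEq_apply {d : ℕ} (C : Matrix (Fin d) (Fin d) ℂ) (p q : Fin d × Fin d) :
    ((C ⊗ₖ C)ᴴ * PiEq d * (C ⊗ₖ C)) p q = momentIntegrand C p.1 p.2 q.1 q.2 := by
  simp only [Matrix.mul_apply, PiEq, Matrix.conjTranspose_apply, Matrix.kroneckerMap_apply,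
    Matrix.of_apply, momentIntegrand, Fintype.sum_prod_type, ite_and, mul_ite, mul_one,
    mul_zero, star_mul', Finset.sum_ite_eq, Finset.mem_univ, if_true]
  simp [mul_assoc]

end HaarTwirl

/-- `(∫_{U(d)} (C ⊗ C)† · Π^eq · (C ⊗ C) dμ_d(C))^{T2} − Π^EPR
= (1/(d+1)) · (I − Π^EPR)`, where `μ_d` is the Haar probability measure on `U(d)` and the
matrix-valued integral is taken entrywise. -/
theorem haar_twirl_PiEq_partialTranspose (d : ℕ) (hd : 0 < d)
    (μ : Measure (Matrix.unitaryGroup (Fin d) ℂ))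
    [μ.IsHaarMeasure] [IsProbabilityMeasure μ] :
    ptrans
        (Matrix.of fun p q =>
          ∫ C : Matrix.unitaryGroup (Fin d) ℂ,
            ((((C : Matrix (Fin d) (Fin d) ℂ) ⊗ₖ (C : Matrix (Fin d) (Fin d) ℂ))ᴴ *
                PiEq d *
                ((C : Matrix (Fin d) (Fin d) ℂ) ⊗ₖ (C : Matrix (Fin d) (Fin d) ℂ))) p q) ∂μ)
        - PiEPR d
      = ((1 : ℂ) / ((d : ℂ) + 1)) •
          ((1 : Matrix (Fin d × Fin d) (Fin d × Fin d) ℂ) - PiEPR d) := by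
  ext p q
  have hd' : (d : ℂ) ≠ 0 := Nat.cast_ne_zero.mpr hd.ne'
  have hd₁ : (d + 1 : ℂ) ≠ 0 := Nat.cast_add_one_ne_zero _
  obtain ⟨a, b⟩ := p
  obtain ⟨c, e⟩ := q
  have h := HaarTwirl.moment_eq μ a e c b
  simp only [HaarTwirl.moment, Fintype.card_fin] at h
  simp only [ptrans, Matrix.sub_apply, Matrix.of_apply, HaarTwirl.conj_PiEq_apply, h, PiEPR,
    Matrix.smul_apply, Matrix.one_apply, Prod.mk.injEq, smul_eq_mul, eq_comm (a := e)]
  split_ifs <;> field_simp <;> ring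
end

section
/- Let d ≥ 3 be an integer and let f₁, f₂, f₃ range independently and uniformly over all functions Fin d → Fin d. Then E_{f₁,f₂,f₃}[(Z_{f₃} H_d Z_{f₂} H_d Z_{f₁})^{⊗2} · Π^eq · ((Z_{f₃} H_d Z_{f₂} H_d Z_{f₁})^{⊗2})†] = ((2d−1)/d²) · Π^eq + ((2d−2)/d²) · (Π^sym − Π^eq). -/
open Matrix
open scoped Kronecker

/-- `ω_d = exp(2πi/d)`. -/
noncomputable def omegaC (d : ℕ) : ℂ := Complex.exp (2 * Real.pi * Complex.I / d)

/-- The diagonal phase matrix `Z_f` with `(Z_f)_{x,x} = ω_d^{f(x)}`. -/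
noncomputable def Zmat (d : ℕ) (f : Fin d → Fin d) : Matrix (Fin d) (Fin d) ℂ :=
  Matrix.diagonal fun x => omegaC d ^ (f x : ℕ)

/-- The discrete Fourier transform matrix, `(H_d)_{y,x} = ω_d^{x·y}/√d`. -/
noncomputable def Hmat (d : ℕ) : Matrix (Fin d) (Fin d) ℂ :=
  Matrix.of fun y x => omegaC d ^ ((x : ℕ) * (y : ℕ)) / (Real.sqrt d : ℂ)

/-- `Z_{f₃} H_d Z_{f₂} H_d Z_{f₁}`. -/
noncomputable def threeFold (d : ℕ) (f₁ f₂ f₃ : Fin d → Fin d) : Matrix (Fin d) (Fin d) ℂ :=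
  Zmat d f₃ * Hmat d * Zmat d f₂ * Hmat d * Zmat d f₁

open scoped ComplexConjugate

/-- The phase picked up by the matrix unit `|a,b⟩⟨c,e|` under conjugation by `Z_f ⊗ Z_f`. -/
noncomputable def pairPhase {d : ℕ} (f : Fin d → Fin d) (a b c e : Fin d) : ℂ :=
  omegaC d ^ (f a : ℕ) * omegaC d ^ (f b : ℕ) *
    (conj (omegaC d ^ (f c : ℕ)) * conj (omegaC d ^ (f e : ℕ)))

lemma isPrimitiveRoot_omegaC {d : ℕ} (hd : d ≠ 0) : IsPrimitiveRoot (omegaC d) d :=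
  Complex.isPrimitiveRoot_exp d hd

lemma omegaC_pow_mul_conj {d : ℕ} (hd : d ≠ 0) (n : ℕ) :
    omegaC d ^ n * conj (omegaC d ^ n) = 1 := by
  rw [Complex.mul_conj, Complex.normSq_eq_norm_sq, norm_pow,
    (isPrimitiveRoot_omegaC hd).norm'_eq_one hd]
  simp

lemma omegaC_pow_fin_add {d : ℕ} (hd : d ≠ 0) (x y : Fin d) :
    omegaC d ^ ((x + y : Fin d) : ℕ) = omegaC d ^ (x : ℕ) * omegaC d ^ (y : ℕ) := by
  rw [Fin.val_add, ← pow_add]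
  conv_rhs => rw [← Nat.mod_add_div ((x : ℕ) + y) d, pow_add, pow_mul,
    (isPrimitiveRoot_omegaC hd).pow_eq_one, one_pow, mul_one]

lemma pairPhase_add {d : ℕ} (hd : d ≠ 0) (f h : Fin d → Fin d) (a b c e : Fin d) :
    pairPhase (f + h) a b c e = pairPhase f a b c e * pairPhase h a b c e := by
  simp only [pairPhase, Pi.add_apply, omegaC_pow_fin_add hd, map_mul]
  ring

lemma pairPhase_self {d : ℕ} (hd : d ≠ 0) (f : Fin d → Fin d) (a b : Fin d) :
    pairPhase f a b a b = 1 := by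
  rw [pairPhase, mul_mul_mul_comm, omegaC_pow_mul_conj hd, omegaC_pow_mul_conj hd, one_mul]

lemma pairPhase_swap {d : ℕ} (f : Fin d → Fin d) (a b c e : Fin d) :
    pairPhase f a b c e = pairPhase f a b e c := by
  simp only [pairPhase]
  ring

lemma sum_pairPhase_eq_zero {d : ℕ} (hd : d ≠ 0) (h : Fin d → Fin d) {a b c e : Fin d}
    (hh : pairPhase h a b c e ≠ 1) : ∑ f : Fin d → Fin d, pairPhase f a b c e = 0 := by
  have : NeZero d := ⟨hd⟩
  have key : ∑ f : Fin d → Fin d, pairPhase f a b c e =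
      (∑ f : Fin d → Fin d, pairPhase f a b c e) * pairPhase h a b c e := by
    rw [Finset.sum_mul, ← Equiv.sum_comp (Equiv.addRight h)]
    exact Finset.sum_congr rfl fun f _ => pairPhase_add hd f h a b c e
  by_contra hS
  exact hh (mul_left_cancel₀ hS (by rw [← key, mul_one]))

lemma sum_pairPhase {d : ℕ} (hd : 3 ≤ d) (a b c e : Fin d) :
    ∑ f : Fin d → Fin d, pairPhase f a b c e =
      (d : ℂ) ^ d * if (a = c ∧ b = e) ∨ (a = e ∧ b = c) then 1 else 0 := by
  have hd0 : d ≠ 0 := by omega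
  have : NeZero d := ⟨hd0⟩
  have h1 : omegaC d ≠ 1 := (isPrimitiveRoot_omegaC hd0).ne_one (by omega)
  have h2 : omegaC d ^ 2 ≠ 1 :=
    (isPrimitiveRoot_omegaC hd0).pow_ne_one_of_pos_of_lt (by omega) (by omega)
  have h2' : omegaC d * omegaC d ≠ 1 := by rwa [← sq]
  have hv : ((1 : Fin d) : ℕ) = 1 := by
    rw [Fin.val_one', Nat.mod_eq_of_lt (by omega)]
  have hc : omegaC d * conj (omegaC d) = 1 := by simpa using omegaC_pow_mul_conj hd0 1
  split_ifs with hm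
  · have : ∀ f : Fin d → Fin d, pairPhase f a b c e = 1 := by
      rintro f
      rcases hm with ⟨rfl, rfl⟩ | ⟨rfl, rfl⟩
      · exact pairPhase_self hd0 f _ _
      · rw [pairPhase_swap, pairPhase_self hd0]
    simp [this]
  · rw [mul_zero]
    have hval : ∀ t x : Fin d, omegaC d ^ ((Pi.single t (1 : Fin d) : Fin d → Fin d) x : ℕ) =
        if x = t then omegaC d else 1 := by
      intro t x
      by_cases hx : x = t
      · subst hx
        rw [Pi.single_eq_same, hv, pow_one, if_pos rfl]
      · simp [hx]
    by_cases hac : a = c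
    · subst hac
      have hbe : b ≠ e := fun h => hm (Or.inl ⟨rfl, h⟩)
      refine sum_pairPhase_eq_zero hd0 (Pi.single b 1) ?_
      simp only [pairPhase, hval]
      by_cases hab : a = b
      · subst hab
        simp [hbe.symm, mul_assoc, hc, h1]
      · simp [hab, hbe.symm, h1]
    · by_cases hae : a = e
      · subst hae
        have hbc : b ≠ c := fun h => hm (Or.inr ⟨rfl, h⟩)
        refine sum_pairPhase_eq_zero hd0 (Pi.single b 1) ?_
        simp only [pairPhase, hval]
        by_cases hab : a = b
        · subst hab
          simp [hbc.symm, mul_assoc, hc, h1]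
        · simp [hab, hbc.symm, h1]
      · refine sum_pairPhase_eq_zero hd0 (Pi.single a 1) ?_
        simp only [pairPhase, hval]
        by_cases hab : b = a
        · subst hab
          simp [Ne.symm hac, Ne.symm hae, h2']
        · simp [hab, Ne.symm hac, Ne.symm hae, h1]

lemma sqrt_mul_sqrt_natCast (d : ℕ) : ((Real.sqrt d : ℂ)) * (Real.sqrt d : ℂ) = d := by
  rw [← Complex.ofReal_mul, Real.mul_self_sqrt (Nat.cast_nonneg d), Complex.ofReal_natCast]

lemma Hmat_mul_conj_self {d : ℕ} (hd : d ≠ 0) (p k : Fin d) :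
    Hmat d p k * conj (Hmat d p k) = 1 / d := by
  simp only [Hmat, Matrix.of_apply, map_div₀, Complex.conj_ofReal]
  rw [div_mul_div_comm, omegaC_pow_mul_conj hd, sqrt_mul_sqrt_natCast]

lemma sum_Hmat_mul_conj {d : ℕ} (hd : d ≠ 0) (p q : Fin d) :
    ∑ k, Hmat d p k * conj (Hmat d q k) = if p = q then 1 else 0 := by
  have hdC : (d : ℂ) ≠ 0 := Nat.cast_ne_zero.2 hd
  split_ifs with hpq
  · subst hpq
    simp [Hmat_mul_conj_self hd, hdC]
  · set z : ℂ := omegaC d ^ (p : ℕ) * conj (omegaC d ^ (q : ℕ)) with hz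
    have hterm : ∀ k : Fin d, Hmat d p k * conj (Hmat d q k) = z ^ (k : ℕ) / d := by
      intro k
      simp only [Hmat, Matrix.of_apply, map_div₀, Complex.conj_ofReal]
      rw [div_mul_div_comm, sqrt_mul_sqrt_natCast, hz, mul_pow, ← map_pow, ← pow_mul, ← pow_mul,
        mul_comm (k : ℕ), mul_comm (k : ℕ)]
    have hzd : z ^ d = 1 := by
      rw [hz, mul_pow, ← map_pow, ← pow_mul, ← pow_mul, mul_comm, mul_comm (p : ℕ),
        mul_comm (q : ℕ), pow_mul, pow_mul, (isPrimitiveRoot_omegaC hd).pow_eq_one]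
      simp
    have hz1 : z ≠ 1 := by
      intro h
      apply hpq
      apply Fin.ext
      apply (isPrimitiveRoot_omegaC hd).pow_inj p.2 q.2
      have hq := omegaC_pow_mul_conj hd (q : ℕ)
      exact mul_right_cancel₀ (right_ne_zero_of_mul_eq_one hq) (h.trans hq.symm)
    simp only [hterm]
    rw [← Finset.sum_div, Fin.sum_univ_eq_sum_range (fun k => z ^ k), geom_sum_eq hz1, hzd]
    simp

lemma kronecker_conj_PiEq_apply {d : ℕ} (U : Matrix (Fin d) (Fin d) ℂ) (p q : Fin d × Fin d) :
    ((U ⊗ₖ U) * PiEq d * (U ⊗ₖ U)ᴴ) p q =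
      ∑ x, U p.1 x * U p.2 x * (conj (U q.1 x) * conj (U q.2 x)) := by
  have h : ∀ r : Fin d × Fin d, ((U ⊗ₖ U) * PiEq d) p r =
      if r.1 = r.2 then U p.1 r.1 * U p.2 r.1 else 0 := by
    rintro ⟨r, s⟩
    simp only [Matrix.mul_apply, PiEq, Matrix.of_apply, Fintype.sum_prod_type,
      Matrix.kroneckerMap_apply]
    by_cases hrs : r = s
    · subst hrs
      simp only [true_and, mul_ite, mul_one, mul_zero]
      rw [Finset.sum_eq_single r, Finset.sum_eq_single r] <;> simp +contextual [eq_comm]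
    · simp [hrs]
  rw [Matrix.mul_apply]
  simp only [h, Fintype.sum_prod_type, Matrix.conjTranspose_apply, Matrix.kroneckerMap_apply]
  simp

lemma threeFold_apply {d : ℕ} (f₁ f₂ f₃ : Fin d → Fin d) (p x : Fin d) :
    threeFold d f₁ f₂ f₃ p x = omegaC d ^ (f₃ p : ℕ) * omegaC d ^ (f₁ x : ℕ) *
      ∑ k, Hmat d p k * Hmat d k x * omegaC d ^ (f₂ k : ℕ) := by
  rw [threeFold, Zmat, Zmat, Zmat, Matrix.mul_diagonal, Matrix.mul_apply, Finset.mul_sum,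
    Finset.sum_mul]
  simp only [Matrix.mul_diagonal, Matrix.diagonal_mul]
  exact Finset.sum_congr rfl fun k _ => by ring

/-- The phase-free part of the path amplitude through `k₁, k₂` (forward) and `l₁, l₂`
(backward). -/
noncomputable def pathAmp (d : ℕ) (p q : Fin d × Fin d) (x k₁ k₂ l₁ l₂ : Fin d) : ℂ :=
  (Hmat d p.1 k₁ * Hmat d k₁ x) * (Hmat d p.2 k₂ * Hmat d k₂ x) *
    (conj (Hmat d q.1 l₁ * Hmat d l₁ x) * conj (Hmat d q.2 l₂ * Hmat d l₂ x))

lemma threeFold_conj_PiEq_apply {d : ℕ} (hd : d ≠ 0) (f₁ f₂ f₃ : Fin d → Fin d)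
    (p q : Fin d × Fin d) :
    ((threeFold d f₁ f₂ f₃ ⊗ₖ threeFold d f₁ f₂ f₃) * PiEq d *
        (threeFold d f₁ f₂ f₃ ⊗ₖ threeFold d f₁ f₂ f₃)ᴴ) p q =
      pairPhase f₃ p.1 p.2 q.1 q.2 * ∑ x, ∑ k₁, ∑ k₂, ∑ l₁, ∑ l₂,
        pathAmp d p q x k₁ k₂ l₁ l₂ * pairPhase f₂ k₁ k₂ l₁ l₂ := by
  rw [kronecker_conj_PiEq_apply, Finset.mul_sum]
  refine Finset.sum_congr rfl fun x _ => ?_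
  simp only [threeFold_apply]
  set S : Fin d → ℂ := fun p => ∑ k, Hmat d p k * Hmat d k x * omegaC d ^ (f₂ k : ℕ) with hS
  have hsum : S p.1 * S p.2 * (conj (S q.1) * conj (S q.2)) = ∑ k₁, ∑ k₂, ∑ l₁, ∑ l₂,
      pathAmp d p q x k₁ k₂ l₁ l₂ * pairPhase f₂ k₁ k₂ l₁ l₂ := by
    simp only [hS, map_sum]
    rw [Finset.sum_mul_sum, Finset.sum_mul_sum, Finset.sum_mul]
    refine Finset.sum_congr rfl fun k₁ _ => ?_
    rw [Finset.sum_mul]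
    refine Finset.sum_congr rfl fun k₂ _ => ?_
    rw [Finset.mul_sum]
    refine Finset.sum_congr rfl fun l₁ _ => ?_
    rw [Finset.mul_sum]
    refine Finset.sum_congr rfl fun l₂ _ => ?_
    simp only [pathAmp, pairPhase, map_mul]
    ring
  rw [← hsum]
  have hx := pairPhase_self hd f₁ x x
  simp only [pairPhase, map_mul] at hx ⊢
  linear_combination (omegaC d ^ (f₃ p.1 : ℕ) * omegaC d ^ (f₃ p.2 : ℕ) *
    (conj (omegaC d ^ (f₃ q.1 : ℕ)) * conj (omegaC d ^ (f₃ q.2 : ℕ))) *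
    (S p.1 * S p.2 * (conj (S q.1) * conj (S q.2)))) * hx

lemma sum_ite_pair_eq {ι : Type*} [Fintype ι] [DecidableEq ι] (g : ι → ι → ι → ι → ℂ) :
    ∑ a, ∑ b, ∑ c, ∑ e, g a b c e * (if (a = c ∧ b = e) ∨ (a = e ∧ b = c) then 1 else 0) =
      ∑ a, ∑ b, g a b a b + ∑ a, ∑ b, g a b b a - ∑ a, g a a a a := by
  have h : ∀ a b c e : ι,
      g a b c e * (if (a = c ∧ b = e) ∨ (a = e ∧ b = c) then 1 else 0) =
      (if a = c then if b = e then g a b c e else 0 else 0) +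
      (if b = c then if a = e then g a b c e else 0 else 0) -
      (if a = b then if a = c then if a = e then g a b c e else 0 else 0 else 0) := by
    intro a b c e
    split_ifs <;> grind
  simp only [h, Finset.sum_add_distrib, Finset.sum_sub_distrib]
  congr 1
  · congr 1 <;> refine Finset.sum_congr rfl fun a _ => Finset.sum_congr rfl fun b _ => ?_
    · rw [Finset.sum_eq_single a] <;> simp +contextual [eq_comm]
    · rw [Finset.sum_eq_single b] <;> simp +contextual [eq_comm]
  · refine Finset.sum_congr rfl fun a _ => ?_
    rw [Finset.sum_eq_single a, Finset.sum_eq_single a] <;> simp +contextual [eq_comm]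

lemma sum_pathAmp_pair {d : ℕ} (hd : d ≠ 0) (p q : Fin d × Fin d) (x : Fin d) :
    ∑ k₁, ∑ k₂, ∑ l₁, ∑ l₂, pathAmp d p q x k₁ k₂ l₁ l₂ *
        (if (k₁ = l₁ ∧ k₂ = l₂) ∨ (k₁ = l₂ ∧ k₂ = l₁) then 1 else 0) =
      (1 / (d : ℂ) ^ 2) * ((if p.1 = q.1 then 1 else 0) * (if p.2 = q.2 then 1 else 0) +
        (if p.1 = q.2 then 1 else 0) * (if p.2 = q.1 then 1 else 0) -
        ∑ k, Hmat d p.1 k * Hmat d p.2 k * (conj (Hmat d q.1 k) * conj (Hmat d q.2 k))) := by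
  have hH := fun k => Hmat_mul_conj_self hd k x
  have hprod : ∀ k l, Hmat d k x * conj (Hmat d k x) * (Hmat d l x * conj (Hmat d l x)) =
      1 / (d : ℂ) ^ 2 := by
    intro k l
    rw [hH, hH]
    ring
  rw [sum_ite_pair_eq, mul_sub, mul_add]
  rw [← sum_Hmat_mul_conj hd p.1 q.1, ← sum_Hmat_mul_conj hd p.2 q.2,
    ← sum_Hmat_mul_conj hd p.1 q.2, ← sum_Hmat_mul_conj hd p.2 q.1,
    Finset.sum_mul_sum, Finset.sum_mul_sum]
  simp only [Finset.mul_sum, pathAmp, map_mul]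
  congr 1
  · congr 1 <;> refine Finset.sum_congr rfl fun a _ => Finset.sum_congr rfl fun b _ => ?_ <;>
      rw [← hprod a b] <;> ring
  · refine Finset.sum_congr rfl fun a _ => ?_
    rw [← hprod a a]
    ring

lemma sum_Hmat_four {d : ℕ} (hd : d ≠ 0) (a b : Fin d) :
    ∑ k, Hmat d a k * Hmat d b k * (conj (Hmat d a k) * conj (Hmat d b k)) = 1 / d := by
  have hdC : (d : ℂ) ≠ 0 := Nat.cast_ne_zero.2 hd
  have h : ∀ k, Hmat d a k * Hmat d b k * (conj (Hmat d a k) * conj (Hmat d b k)) =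
      1 / d * (1 / d) := fun k => by
    rw [mul_mul_mul_comm, Hmat_mul_conj_self hd, Hmat_mul_conj_self hd]
  simp only [h, Finset.sum_const, Finset.card_univ, Fintype.card_fin, nsmul_eq_mul]
  field_simp

lemma sum_threeFold_conj_PiEq_apply {d : ℕ} (hd : 3 ≤ d) (p q : Fin d × Fin d) :
    ∑ f : (Fin d → Fin d) × (Fin d → Fin d) × (Fin d → Fin d),
      (((threeFold d f.1 f.2.1 f.2.2) ⊗ₖ (threeFold d f.1 f.2.1 f.2.2)) * PiEq d *
        ((threeFold d f.1 f.2.1 f.2.2) ⊗ₖ (threeFold d f.1 f.2.1 f.2.2))ᴴ) p q =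
      ((d : ℂ) ^ d) ^ 3 *
        (if (p.1 = q.1 ∧ p.2 = q.2) ∨ (p.1 = q.2 ∧ p.2 = q.1) then 1 else 0) *
        ∑ x, ∑ k₁, ∑ k₂, ∑ l₁, ∑ l₂, pathAmp d p q x k₁ k₂ l₁ l₂ *
          (if (k₁ = l₁ ∧ k₂ = l₂) ∨ (k₁ = l₂ ∧ k₂ = l₁) then 1 else 0) := by
  have hd0 : d ≠ 0 := by omega
  have hf₂ : ∑ f₂ : Fin d → Fin d, ∑ x, ∑ k₁, ∑ k₂, ∑ l₁, ∑ l₂,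
        pathAmp d p q x k₁ k₂ l₁ l₂ * pairPhase f₂ k₁ k₂ l₁ l₂ =
      (d : ℂ) ^ d * ∑ x, ∑ k₁, ∑ k₂, ∑ l₁, ∑ l₂, pathAmp d p q x k₁ k₂ l₁ l₂ *
        (if (k₁ = l₁ ∧ k₂ = l₂) ∨ (k₁ = l₂ ∧ k₂ = l₁) then 1 else 0) := by
    simp only [Finset.mul_sum, mul_left_comm ((d : ℂ) ^ d), ← sum_pairPhase hd]
    rw [Finset.sum_comm]
    refine Finset.sum_congr rfl fun x _ => ?_
    rw [Finset.sum_comm]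
    refine Finset.sum_congr rfl fun k₁ _ => ?_
    rw [Finset.sum_comm]
    refine Finset.sum_congr rfl fun k₂ _ => ?_
    rw [Finset.sum_comm]
    refine Finset.sum_congr rfl fun l₁ _ => ?_
    rw [Finset.sum_comm]
  simp only [threeFold_conj_PiEq_apply hd0, Fintype.sum_prod_type]
  simp only [← Finset.sum_mul, ← Finset.mul_sum, sum_pairPhase hd, hf₂]
  simp only [Finset.sum_const, Finset.card_univ, Fintype.card_fun, Fintype.card_fin,
    nsmul_eq_mul, Nat.cast_pow]
  ring

/-- `E_{f₁,f₂,f₃}[(Z_{f₃} H_d Z_{f₂} H_d Z_{f₁})^{⊗2} Π^eq ((…)^{⊗2})†]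
= ((2d−1)/d²) Π^eq + ((2d−2)/d²) (Π^sym − Π^eq)`, the expectation being the uniform average
over the three independent function choices. -/
theorem twirl_threeFold_PiEq (d : ℕ) (hd : 3 ≤ d) :
    ((1 : ℂ) / ((d : ℂ) ^ (d : ℕ)) ^ 3) •
        ∑ f : (Fin d → Fin d) × (Fin d → Fin d) × (Fin d → Fin d),
          ((threeFold d f.1 f.2.1 f.2.2) ⊗ₖ (threeFold d f.1 f.2.1 f.2.2)) * PiEq d *
            ((threeFold d f.1 f.2.1 f.2.2) ⊗ₖ (threeFold d f.1 f.2.1 f.2.2))ᴴ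
      = ((2 * (d : ℂ) - 1) / (d : ℂ) ^ 2) • PiEq d +
          ((2 * (d : ℂ) - 2) / (d : ℂ) ^ 2) • (PiSym d - PiEq d) := by
  have hd0 : d ≠ 0 := by omega
  have hdC : (d : ℂ) ≠ 0 := Nat.cast_ne_zero.2 hd0
  ext p q
  rw [Matrix.smul_apply, Matrix.sum_apply, sum_threeFold_conj_PiEq_apply hd]
  simp only [sum_pathAmp_pair hd0, Finset.sum_const, Finset.card_univ, Fintype.card_fin,
    nsmul_eq_mul, smul_eq_mul, ← mul_assoc]
  rw [one_div_mul_cancel (pow_ne_zero _ (pow_ne_zero _ hdC)), one_mul]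
  simp only [PiSym, PiEq, SwapF, Matrix.add_apply, Matrix.sub_apply, Matrix.smul_apply,
    Matrix.of_apply, Matrix.one_apply, smul_eq_mul]
  obtain ⟨a, b⟩ := p
  obtain ⟨c, e⟩ := q
  by_cases hm : (a = c ∧ b = e) ∨ (a = e ∧ b = c)
  · have hfour : ∑ k, Hmat d a k * Hmat d b k * (conj (Hmat d c k) * conj (Hmat d e k)) =
        1 / d := by
      rcases hm with ⟨rfl, rfl⟩ | ⟨rfl, rfl⟩
      · exact sum_Hmat_four hd0 _ _
      · rw [← sum_Hmat_four hd0 a b]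
        exact Finset.sum_congr rfl fun k _ => by ring
    simp only [← mul_assoc] at hfour ⊢
    rw [if_pos hm, hfour]
    by_cases hab : a = b
    · subst hab
      rcases hm with ⟨rfl, rfl⟩ | ⟨rfl, rfl⟩ <;> simp <;> field_simp <;> ring
    · rcases hm with ⟨rfl, rfl⟩ | ⟨rfl, rfl⟩ <;> simp [hab, Ne.symm hab] <;> field_simp
  · rw [if_neg hm]
    have h₁ : ¬ (a = e ∧ b = c) := fun h => hm (Or.inr h)
    have h₂ : ¬ (a = c ∧ b = e) := fun h => hm (Or.inl h)
    have h₃ : ¬ (a = b ∧ c = e ∧ a = c) := by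
      rintro ⟨rfl, rfl, rfl⟩
      exact hm (Or.inl ⟨rfl, rfl⟩)
    simp [h₁, h₂, h₃]
end
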